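/- Let α = 7 and N = 7. For every real number T > 0, the 7×7 matrix M(T) with entries M(T)_{jk} = ∫_{0}^{T} L̃_j(x) L̃_k(x) e^{−x} x⁷/(x+7)² dx for 1 ≤ j, k ≤ 7 commutes with the 7×7 real symmetric pentadiagonal matrix 𝓛(T) whose entries on and above the diagonal are: 𝓛_{11} = −√7·(3T²+16T−260)/(110√2), 𝓛_{12} = −6(T+19)/55, 𝓛_{13} = √5/(11√2), 𝓛_{22} = −(11T²+32T−1232)/(66√14), 𝓛_{23} = −2√5·(T+17)/(11√7), 𝓛_{24} = 2√2/(√3·√7·√11), 𝓛_{33} = −(23T²+8T−3060)/(165√14), 𝓛_{34} = −2√3·(T+15)/(√5·√7·√11), 𝓛_{35} = 18√2/(55√7), 𝓛_{44} = −(6T²−14T−893)/(55√14), 𝓛_{45} = −2√3·(T+13)/(√5·√7·√11), 𝓛_{46} = √13/(11√7), 𝓛_{55} = −(25T²−128T−3964)/(330√14), 𝓛_{56} = −√26·(T+11)/(√3·√5·√7·√11), 𝓛_{57} = 1/√330, 𝓛_{66} = −(13T²−104T−2100)/(330√14), 𝓛_{67} = −√26·(T+9)/55, 𝓛_{77} =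 0, all other entries above the diagonal being 0, and 𝓛_{jk} = 𝓛_{kj}; that is, 𝓛(T)·M(T) = M(T)·𝓛(T). -/

import Mathlib

open Real MeasureTheory

/-- The generalized binomial coefficient `C(r, k) = r (r-1) ⋯ (r-k+1) / k!`. -/
noncomputable def genChoose (r : ℝ) (k : ℕ) : ℝ :=
  (∏ i ∈ Finset.range k, (r - i)) / (Nat.factorial k : ℝ)

/-- The classical Laguerre polynomials
`L_n^{(α)}(x) = Σ_{k=0}^n (-1)^k C(n+α, n-k) x^k / k!`. -/
noncomputable def laguerreP (α : ℝ) (n : ℕ) (x : ℝ) : ℝ :=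
  ∑ k ∈ Finset.range (n + 1),
    (-1 : ℝ) ^ k * genChoose ((n : ℝ) + α) (n - k) * x ^ k / (Nat.factorial k : ℝ)

/-- The exceptional Laguerre polynomials (missing degree `0`):
`L̂_n^{(α)} = -(x+α+1) L_{n-1}^{(α)} + L_{n-2}^{(α)}` for `n ≥ 1`, with `L_{-1}^{(α)} = 0`
(handled by the guard `n = 1`). -/
noncomputable def excLaguerre (α : ℝ) (n : ℕ) (x : ℝ) : ℝ :=
  if n = 0 then 0
  else -(x + α + 1) * laguerreP α (n - 1) x + (if n = 1 then 0 else laguerreP α (n - 2) x)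

/-- `‖L̂_n^{(7)}‖² = ∫_0^∞ L̂_n^{(7)}(x)² e^{-x} x⁷/(x+7)² dx`. -/
noncomputable def normSqL (n : ℕ) : ℝ :=
  ∫ x in Set.Ioi (0 : ℝ), (excLaguerre 7 n x) ^ 2 * Real.exp (-x) * x ^ 7 / (x + 7) ^ 2

/-- The normalized exceptional Laguerre polynomials `L̃_n = L̂_n^{(7)}/‖L̂_n^{(7)}‖`. -/
noncomputable def lTil (n : ℕ) (x : ℝ) : ℝ := excLaguerre 7 n x / Real.sqrt (normSqL n)

/-- `M(T)_{jk} = ∫_0^T L̃_j(x) L̃_k(x) e^{-x} x⁷/(x+7)² dx`, `1 ≤ j,k ≤ 7`. -/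
noncomputable def MMat (T : ℝ) : Matrix (Fin 7) (Fin 7) ℝ := fun j k =>
  ∫ x in (0 : ℝ)..T,
    lTil ((j : ℕ) + 1) x * lTil ((k : ℕ) + 1) x * Real.exp (-x) * x ^ 7 / (x + 7) ^ 2

/-- The commuting pentadiagonal matrix `𝓛(T)`. -/
noncomputable def LMat (T : ℝ) : Matrix (Fin 7) (Fin 7) ℝ :=
  !![-Real.sqrt 7*(3*T^2+16*T-260)/(110*Real.sqrt 2), -6*(T+19)/55,
       Real.sqrt 5/(11*Real.sqrt 2), 0, 0, 0, 0;
     -6*(T+19)/55, -(11*T^2+32*T-1232)/(66*Real.sqrt 14),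
       -2*Real.sqrt 5*(T+17)/(11*Real.sqrt 7),
       2*Real.sqrt 2/(Real.sqrt 3*Real.sqrt 7*Real.sqrt 11), 0, 0, 0;
     Real.sqrt 5/(11*Real.sqrt 2), -2*Real.sqrt 5*(T+17)/(11*Real.sqrt 7),
       -(23*T^2+8*T-3060)/(165*Real.sqrt 14),
       -2*Real.sqrt 3*(T+15)/(Real.sqrt 5*Real.sqrt 7*Real.sqrt 11),
       18*Real.sqrt 2/(55*Real.sqrt 7), 0, 0;
     0, 2*Real.sqrt 2/(Real.sqrt 3*Real.sqrt 7*Real.sqrt 11),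
       -2*Real.sqrt 3*(T+15)/(Real.sqrt 5*Real.sqrt 7*Real.sqrt 11),
       -(6*T^2-14*T-893)/(55*Real.sqrt 14),
       -2*Real.sqrt 3*(T+13)/(Real.sqrt 5*Real.sqrt 7*Real.sqrt 11),
       Real.sqrt 13/(11*Real.sqrt 7), 0;
     0, 0, 18*Real.sqrt 2/(55*Real.sqrt 7),
       -2*Real.sqrt 3*(T+13)/(Real.sqrt 5*Real.sqrt 7*Real.sqrt 11),
       -(25*T^2-128*T-3964)/(330*Real.sqrt 14),
       -Real.sqrt 26*(T+11)/(Real.sqrt 3*Real.sqrt 5*Real.sqrt 7*Real.sqrt 11),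
       1/Real.sqrt 330;
     0, 0, 0, Real.sqrt 13/(11*Real.sqrt 7),
       -Real.sqrt 26*(T+11)/(Real.sqrt 3*Real.sqrt 5*Real.sqrt 7*Real.sqrt 11),
       -(13*T^2-104*T-2100)/(330*Real.sqrt 14), -Real.sqrt 26*(T+9)/55;
     0, 0, 0, 0, 1/Real.sqrt 330, -Real.sqrt 26*(T+9)/55, 0]

/-!
Let `f_m` be the exceptional Laguerre polynomial of degree `m + 1` and `W` its weight. For suitable
coefficients the combinations `P_m` of `f_{m-2}, …, f_{m+2}` satisfy Green's identity
`(P_j f_k - P_k f_j) W = Φ_{jk}'` with a flux `Φ_{jk}` divisible by `(x - T) x^α`, which therefore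
vanishes at `0` and `T`; so `∫_0^T P_j f_k W` is symmetric in `j` and `k`. The ratios of the norms
`‖f_m‖` are such that the functions `P_m / ‖f_m‖` are the combinations of the normalised polynomials
given by the rows of a symmetric pentadiagonal matrix `S`. Hence `S M` is symmetric, and
`S M = (S M)ᵀ = M S`. For `α = N = 7` the matrix `S` is `660 √14 𝓛(T)`.

Every identity reduces to the pair `u = L_m^{(α)}`, `y = L_m^{(α-1)}`, whose span over the rational
functions is closed under differentiation and under shifts of `m`.
-/

section Laguerre

variable (a : ℝ) (n : ℕ) (x : ℝ)

lemma succ_mul_genChoose_succ (r : ℝ) (k : ℕ) :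
    (k + 1) * genChoose (r + 1) (k + 1) = (r + 1) * genChoose r k := by
  have shift : ∏ i ∈ Finset.range k, (r + 1 - ((i + 1 : ℕ) : ℝ)) =
      ∏ i ∈ Finset.range k, (r - i) :=
    Finset.prod_congr rfl fun i _ => by push_cast; ring
  simp only [genChoose]
  rw [Finset.prod_range_succ', shift, Nat.factorial_succ]
  have := Nat.factorial_ne_zero k
  push_cast
  field_simp
  ring

lemma genChoose_succ_succ (r : ℝ) (k : ℕ) :
    genChoose (r + 1) (k + 1) = genChoose r k + genChoose r (k + 1) := by
  have absorb := succ_mul_genChoose_succ r k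
  have last : (k + 1) * genChoose r (k + 1) = (r - k) * genChoose r k := by
    simp only [genChoose]
    rw [Finset.prod_range_succ, Nat.factorial_succ]
    have := Nat.factorial_ne_zero k
    push_cast
    field_simp
  exact mul_left_cancel₀ (Nat.cast_add_one_ne_zero k) (by linear_combination absorb - last)

lemma laguerreP_zero_left : laguerreP a 0 x = 1 := by
  simp [laguerreP, genChoose]

lemma laguerreP_one_left : laguerreP a 1 x = 1 + a - x := by
  simp [laguerreP, genChoose, Finset.sum_range_succ, sub_eq_add_neg]

lemma laguerreP_zero_right : laguerreP a n 0 = genChoose (n + a) n := by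
  rw [laguerreP, Finset.sum_range_succ']
  simp

lemma hasDerivAt_laguerreP_zero : HasDerivAt (laguerreP a 0) 0 x := by
  rw [show laguerreP a 0 = fun _ => 1 from funext (laguerreP_zero_left a)]
  exact hasDerivAt_const x 1

lemma hasDerivAt_laguerreP_succ :
    HasDerivAt (laguerreP a (n + 1)) (-laguerreP (a + 1) n x) x := by
  have termwise := HasDerivAt.fun_sum fun k (_ : k ∈ Finset.range (n + 2)) =>
    ((hasDerivAt_pow k x).const_mul
      ((-1) ^ k * genChoose ((n + 1 : ℕ) + a) (n + 1 - k))).div_const (k.factorial : ℝ)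
  refine termwise.congr_deriv ?_
  rw [Finset.sum_range_succ', laguerreP, ← Finset.sum_neg_distrib]
  simp only [CharP.cast_eq_zero, zero_mul, mul_zero, zero_div, add_zero]
  refine Finset.sum_congr rfl fun k _ => ?_
  have := Nat.factorial_ne_zero k
  rw [Nat.factorial_succ, Nat.add_sub_add_right, Nat.add_sub_cancel,
    show ((n + 1 : ℕ) : ℝ) + a = n + (a + 1) by push_cast; ring]
  push_cast
  field_simp
  ring

lemma eq_of_hasDerivAt_of_eq_zero {f g f' : ℝ → ℝ} (hf : ∀ x, HasDerivAt f (f' x) x)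
    (hg : ∀ x, HasDerivAt g (f' x) x) (h0 : f 0 = g 0) (x : ℝ) : f x = g x := by
  have hconst := is_const_of_deriv_eq_zero (f := f - g)
    (fun x => ((hf x).sub (hg x)).differentiableAt)
    (fun x => by simpa using ((hf x).sub (hg x)).deriv) x 0
  simpa [h0, sub_eq_zero] using hconst

/- This contiguity relation and the next follow by induction on the degree: the derivative of the
relation is the same relation for the parameter `a + 1` in one degree less, and at `x = 0` it is an
identity between binomial coefficients. -/
lemma laguerreP_add_one_succ :
    laguerreP (a + 1) (n + 1) x = laguerreP (a + 1) n x + laguerreP a (n + 1) x := by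
  induction n generalizing a x with
  | zero =>
    rw [laguerreP_one_left, laguerreP_one_left, laguerreP_zero_left]
    ring
  | succ n ih =>
    refine eq_of_hasDerivAt_of_eq_zero
      (g := fun x => laguerreP (a + 1) (n + 1) x + laguerreP a (n + 1 + 1) x)
      (hasDerivAt_laguerreP_succ (a + 1) (n + 1)) (fun x => ?_) ?_ x
    · refine ((hasDerivAt_laguerreP_succ (a + 1) n x).fun_add
        (hasDerivAt_laguerreP_succ a (n + 1) x)).congr_deriv ?_
      linear_combination ih (a + 1) x
    · have pascal := genChoose_succ_succ (n + 2 + a) (n + 1)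
      simp only [laguerreP_zero_right]
      convert pascal using 2 <;> push_cast <;> ring_nf

lemma succ_mul_laguerreP_succ :
    (n + 1) * laguerreP a (n + 1) x =
      (n + a + 1) * laguerreP a n x - x * laguerreP (a + 1) n x := by
  induction n generalizing a x with
  | zero =>
    rw [laguerreP_one_left, laguerreP_zero_left, laguerreP_zero_left]
    push_cast
    ring
  | succ n ih =>
    refine eq_of_hasDerivAt_of_eq_zero
      (f := fun x => ((n + 1 : ℕ) + 1) * laguerreP a (n + 1 + 1) x)
      (g := fun x =>
        ((n + 1 : ℕ) + a + 1) * laguerreP a (n + 1) x - x * laguerreP (a + 1) (n + 1) x)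
      (fun x => (hasDerivAt_laguerreP_succ a (n + 1) x).const_mul _) (fun x => ?_) ?_ x
    · refine (((hasDerivAt_laguerreP_succ a n x).const_mul _).fun_sub
        ((hasDerivAt_id' x).fun_mul (hasDerivAt_laguerreP_succ (a + 1) n x))).congr_deriv ?_
      push_cast
      linear_combination ih (a + 1) x
    · have absorption := succ_mul_genChoose_succ ((n + 1 : ℕ) + a) (n + 1)
      simp only [laguerreP_zero_right]
      rw [zero_mul, sub_zero, ← absorption]
      push_cast
      ring_nf

end Laguerre

section Ladder

variable (α : ℝ) (m : ℕ) (x : ℝ)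

lemma laguerreP_succ_eq_add :
    laguerreP α (m + 1) x = laguerreP α m x + laguerreP (α - 1) (m + 1) x := by
  simpa only [sub_add_cancel] using laguerreP_add_one_succ (α - 1) m x

lemma succ_mul_laguerreP_sub_one_succ :
    (m + 1) * laguerreP (α - 1) (m + 1) x =
      (m + α) * laguerreP (α - 1) m x - x * laguerreP α m x := by
  have := succ_mul_laguerreP_succ (α - 1) m x
  rw [sub_add_cancel] at this
  linear_combination this

lemma hasDerivAt_laguerreP_sub_one :
    HasDerivAt (laguerreP (α - 1) m) (laguerreP (α - 1) m x - laguerreP α m x) x := by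
  cases m with
  | zero =>
    simpa only [laguerreP_zero_left, sub_self] using hasDerivAt_laguerreP_zero (α - 1) x
  | succ m =>
    refine (hasDerivAt_laguerreP_succ (α - 1) m x).congr_deriv ?_
    rw [sub_add_cancel]
    linear_combination laguerreP_succ_eq_add α m x

lemma hasDerivAt_laguerreP {x : ℝ} (hx : x ≠ 0) :
    HasDerivAt (laguerreP α m)
      (((m + α) * laguerreP (α - 1) m x - α * laguerreP α m x) / x) x := by
  cases m with
  | zero =>
    simpa [laguerreP_zero_left] using hasDerivAt_laguerreP_zero α x
  | succ m =>
    refine (hasDerivAt_laguerreP_succ α m x).congr_deriv ?_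
    rw [eq_div_iff hx]
    have ladder := succ_mul_laguerreP_succ α m x
    push_cast
    linear_combination -ladder + (m + 1 + α) * laguerreP_succ_eq_add α m x

end Ladder

section Exceptional

variable (α : ℝ) (m : ℕ) (x : ℝ)

lemma excLaguerre_zero : excLaguerre α 0 x = 0 := by
  simp [excLaguerre]

lemma excLaguerre_succ :
    excLaguerre α (m + 1) x = -(x + α) * laguerreP α m x - laguerreP (α - 1) m x := by
  cases m with
  | zero =>
    simp only [excLaguerre, zero_add, one_ne_zero, if_false, if_true, Nat.sub_self,
      laguerreP_zero_left]
    ring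
  | succ m =>
    simp only [excLaguerre, Nat.add_eq_zero_iff, one_ne_zero, and_false, if_false,
      Nat.add_sub_cancel, Nat.add_eq_right, Nat.reduceSubDiff]
    linear_combination -laguerreP_succ_eq_add α m x

lemma succ_mul_excLaguerre_add_two :
    (m + 1) * excLaguerre α (m + 2) x =
      (x - (x + α) * (m + 1 - x)) * laguerreP α m x -
        (x + α + 1) * (m + α) * laguerreP (α - 1) m x := by
  rw [excLaguerre_succ]
  linear_combination -(x + α) * (m + 1) * laguerreP_succ_eq_add α m x -
    (x + α + 1) * succ_mul_laguerreP_sub_one_succ α m x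

lemma succ_mul_excLaguerre_add_three :
    (m + 1) * (m + 2) * excLaguerre α (m + 3) x =
      ((x - (x + α) * (m + 2 - x)) * (m + 1 - x) + (x + α + 1) * (m + 1 + α) * x) *
          laguerreP α m x +
        (x - (x + α) * (m + 2 - x) - (x + α + 1) * (m + 1 + α)) * (m + α) *
          laguerreP (α - 1) m x := by
  have next := succ_mul_excLaguerre_add_two α (m + 1) x
  push_cast at next
  linear_combination (m + 1) * next +
    (m + 1) * (x - (x + α) * (m + 2 - x)) * laguerreP_succ_eq_add α m x +
    (x - (x + α) * (m + 2 - x) - (x + α + 1) * (m + 1 + α)) *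
      succ_mul_laguerreP_sub_one_succ α m x

lemma mul_excLaguerre_self :
    (m - 1 + α) * excLaguerre α m x =
      -((x + α) * (m - 1 + α) + x) * laguerreP α m x +
        ((x + α) * (m - 1 + α) + x - m) * laguerreP (α - 1) m x := by
  cases m with
  | zero => simp [excLaguerre_zero, laguerreP_zero_left]
  | succ m =>
    rw [excLaguerre_succ]
    push_cast
    linear_combination ((x + α) * (m + α) + x) * laguerreP_succ_eq_add α m x +
      succ_mul_laguerreP_sub_one_succ α m x

lemma mul_excLaguerre_pred :
    (m - 2 + α) * excLaguerre α (m - 1) x =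
      ((x + α - 1) * x - ((x + α) * (m - 2 + α) + x)) * laguerreP α m x +
        ((x + α) * (m - 2 + α) + x + (x + α - 1) * (m - x)) * laguerreP (α - 1) m x := by
  cases m with
  | zero =>
    simp only [Nat.zero_sub, excLaguerre_zero, laguerreP_zero_left, CharP.cast_eq_zero]
    ring
  | succ m =>
    have prev := mul_excLaguerre_self α m x
    rw [Nat.add_sub_cancel]
    push_cast
    linear_combination prev + ((x + α) * (m - 1 + α) + x - (x + α - 1) * x) *
      laguerreP_succ_eq_add α m x - (x + α - 1) * succ_mul_laguerreP_sub_one_succ α m x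

end Exceptional

section Commutation

/-- The first off-diagonal coefficient of the commuting five-term combination `commRow`, up to the
factor `-2` and a factor independent of `T` and `N`. -/
noncomputable def commOffDiag (α T : ℝ) (N m : ℕ) : ℝ :=
  (N - 1 - m) * (T + 2 * (N - 1) + α - 2 * m)

/-- The second off-diagonal coefficient of `commRow`, up to a factor independent of `N`. -/
noncomputable def commOffDiagTwo (N m : ℕ) : ℝ :=
  (N - 1 - m) * (N - 2 - m)

/-- The diagonal coefficient of `commRow`, determined by the requirement that
`commRow_mul_sub_commRow_mul` hold. -/
noncomputable def commDiag (α T : ℝ) (N m : ℕ) : ℝ :=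
  (N - 1 - m) *
    (-(m + N + 2 * α) * T ^ 2 + 2 * (m * (2 * m + 1 + 3 * α) - N * (α + 1)) * T +
      (N * (3 * α ^ 2 + 3 * α - 2 + 6 * m ^ 2 + 6 * m + 10 * α * m) -
        (6 * m ^ 3 + 6 * m ^ 2 + 2 * m) - α * (6 * m ^ 2 + 3 * m + 4) + 3 * α ^ 2 * m + 2 * α ^ 3))

/-- The five-term combination of exceptional Laguerre polynomials centred at degree `m + 1` whose
coefficients form, after normalisation, row `m` of the commuting matrix. In low degrees the
subtraction `m - 1` truncates to degree `0`, where `excLaguerre` vanishes. -/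
noncomputable def commRow (α T : ℝ) (N m : ℕ) (x : ℝ) : ℝ :=
  commDiag α T N m * excLaguerre α (m + 1) x
    - 2 * commOffDiag α T N m * ((m + 1) * (m + α + 1)) * excLaguerre α (m + 2) x
    + commOffDiagTwo N m * ((m + 1) * (m + 2)) * excLaguerre α (m + 3) x
    - 2 * (N - m) * (T + 2 * N + α - 2 * m) * ((m - 1 + α) * (m + α + 1)) * excLaguerre α m x
    + (N - m) * (N + 1 - m) * ((m - 2 + α) * (m + α + 1)) * excLaguerre α (m - 1) x

/-- The orthogonality weight of the exceptional Laguerre polynomials. -/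
noncomputable def excWeight (α x : ℝ) : ℝ := exp (-x) * x ^ α / (x + α) ^ 2

variable {α x : ℝ}

lemma hasDerivAt_rpow_mul_exp_neg (α : ℝ) (hx : x ≠ 0) :
    HasDerivAt (fun x => exp (-x) * x ^ α) ((α / x - 1) * (exp (-x) * x ^ α)) x := by
  have hexp : HasDerivAt (fun x : ℝ => exp (-x)) (-exp (-x)) x := by
    simpa using (hasDerivAt_neg x).exp
  refine (hexp.mul (hasDerivAt_rpow_const (p := α) (Or.inl hx))).congr_deriv ?_
  rw [rpow_sub_one hx]
  field_simp
  ring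

lemma hasDerivAt_excWeight (hx : x ≠ 0) (hxα : x + α ≠ 0) :
    HasDerivAt (excWeight α) ((α / x - 1 - 2 / (x + α)) * excWeight α x) x := by
  refine ((hasDerivAt_rpow_mul_exp_neg α hx).fun_div
    (((hasDerivAt_id' x).add_const α).fun_pow 2) (pow_ne_zero 2 hxα)).congr_deriv ?_
  unfold excWeight
  field_simp
  ring

lemma hasDerivAt_excLaguerre (m : ℕ) (hx : x ≠ 0) :
    HasDerivAt (excLaguerre α (m + 1))
      (-(α * excLaguerre α (m + 1) x + (x + α) * (m + α + 1) * laguerreP (α - 1) m x) / x) x := by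
  rw [show excLaguerre α (m + 1) = fun x => -(x + α) * laguerreP α m x - laguerreP (α - 1) m x
    from funext (excLaguerre_succ α m)]
  refine ((((hasDerivAt_id' x).add_const α).fun_neg.fun_mul (hasDerivAt_laguerreP α m hx)).fun_sub
    (hasDerivAt_laguerreP_sub_one α m x)).congr_deriv ?_
  field_simp
  ring

/-- `x (f_j f_k' - f_j' f_k)` for `f_m = excLaguerre α (m + 1)`, with the derivatives eliminated by
`hasDerivAt_excLaguerre`. -/
noncomputable def excWronskian (α : ℝ) (j k : ℕ) (x : ℝ) : ℝ :=
  (x + α) * ((j + α + 1) * laguerreP (α - 1) j x * excLaguerre α (k + 1) x -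
    (k + α + 1) * laguerreP (α - 1) k x * excLaguerre α (j + 1) x)

lemma hasDerivAt_excWronskian_mul_excWeight (j k : ℕ) (hx : x ≠ 0) (hxα : x + α ≠ 0) :
    HasDerivAt (fun x => excWronskian α j k x * excWeight α x)
      ((j - k) * (excLaguerre α (j + 1) x * excLaguerre α (k + 1) x) * excWeight α x) x := by
  have hfj := hasDerivAt_excLaguerre (α := α) j hx
  have hfk := hasDerivAt_excLaguerre (α := α) k hx
  have hyj := (hasDerivAt_laguerreP_sub_one α j x).const_mul (j + α + 1)
  have hyk := (hasDerivAt_laguerreP_sub_one α k x).const_mul (k + α + 1)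
  refine ((((hasDerivAt_id' x).add_const α).fun_mul
    ((hyj.fun_mul hfk).fun_sub (hyk.fun_mul hfj))).fun_mul
      (hasDerivAt_excWeight hx hxα)).congr_deriv ?_
  simp only [excLaguerre_succ]
  field_simp
  ring

lemma hasDerivAt_mul_excLaguerre_mul_excLaguerre_mul_excWeight (j k : ℕ) (hx : x ≠ 0)
    (hxα : x + α ≠ 0) :
    HasDerivAt (fun x => x * (excLaguerre α (j + 1) x * excLaguerre α (k + 1) x) * excWeight α x)
      (((1 - α - x - 2 * x / (x + α)) * (excLaguerre α (j + 1) x * excLaguerre α (k + 1) x) -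
        (x + α) * ((j + α + 1) * laguerreP (α - 1) j x * excLaguerre α (k + 1) x +
          (k + α + 1) * laguerreP (α - 1) k x * excLaguerre α (j + 1) x)) * excWeight α x) x := by
  refine (((hasDerivAt_id' x).fun_mul ((hasDerivAt_excLaguerre j hx).fun_mul
    (hasDerivAt_excLaguerre k hx))).fun_mul (hasDerivAt_excWeight hx hxα)).congr_deriv ?_
  field_simp
  ring

/-- The coefficient of the Wronskian in `commFlux`. -/
noncomputable def commDrift (α T : ℝ) (N j k : ℕ) (x : ℝ) : ℝ :=
  (j + k + 1 - 2 * N) * x - (j + k + 1 + 2 * α) * T - (2 * α ^ 2 + 2 * α * N + 2) + 2 * α / (x + α)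

lemma hasDerivAt_commDrift (T : ℝ) (N j k : ℕ) (hxα : x + α ≠ 0) :
    HasDerivAt (commDrift α T N j k) (j + k + 1 - 2 * N - 2 * α / (x + α) ^ 2) x := by
  refine (((((hasDerivAt_id' x).const_mul (j + k + 1 - 2 * N : ℝ)).sub_const
    ((j + k + 1 + 2 * α) * T)).sub_const (2 * α ^ 2 + 2 * α * N + 2)).fun_add
      ((hasDerivAt_const x (2 * α)).fun_div ((hasDerivAt_id' x).add_const α) hxα)).congr_deriv ?_
  field_simp
  ring

/-- The boundary term in Green's identity for `commRow`: an antiderivative of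
`(P_j f_k - P_k f_j) * excWeight α`, where `P_m = commRow α T N m` and
`f_m = excLaguerre α (m + 1)`. -/
noncomputable def commFlux (α T : ℝ) (N j k : ℕ) (x : ℝ) : ℝ :=
  (x - T) * (2 * (k - j) * (x * (excLaguerre α (j + 1) x * excLaguerre α (k + 1) x) * excWeight α x)
    + commDrift α T N j k x * (excWronskian α j k x * excWeight α x))

lemma commRow_eq_laguerreP (α T : ℝ) (N m : ℕ) (x : ℝ) :
    commRow α T N m x =
      commDiag α T N m * (-(x + α) * laguerreP α m x - laguerreP (α - 1) m x)
        - 2 * commOffDiag α T N m * (m + α + 1) *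
          ((x - (x + α) * (m + 1 - x)) * laguerreP α m x -
            (x + α + 1) * (m + α) * laguerreP (α - 1) m x)
        + commOffDiagTwo N m *
          (((x - (x + α) * (m + 2 - x)) * (m + 1 - x) + (x + α + 1) * (m + 1 + α) * x) *
              laguerreP α m x +
            (x - (x + α) * (m + 2 - x) - (x + α + 1) * (m + 1 + α)) * (m + α) *
              laguerreP (α - 1) m x)
        - 2 * (N - m) * (T + 2 * N + α - 2 * m) * (m + α + 1) *
          (-((x + α) * (m - 1 + α) + x) * laguerreP α m x +
            ((x + α) * (m - 1 + α) + x - m) * laguerreP (α - 1) m x)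
        + (N - m) * (N + 1 - m) * (m + α + 1) *
          (((x + α - 1) * x - ((x + α) * (m - 2 + α) + x)) * laguerreP α m x +
            ((x + α) * (m - 2 + α) + x + (x + α - 1) * (m - x)) * laguerreP (α - 1) m x) := by
  rw [commRow, excLaguerre_succ]
  linear_combination
    -2 * commOffDiag α T N m * (m + α + 1) * succ_mul_excLaguerre_add_two α m x
      + commOffDiagTwo N m * succ_mul_excLaguerre_add_three α m x
      - 2 * (N - m) * (T + 2 * N + α - 2 * m) * (m + α + 1) * mul_excLaguerre_self α m x
      + (N - m) * (N + 1 - m) * (m + α + 1) * mul_excLaguerre_pred α m x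

/- The right-hand side is the derivative of `commFlux α T N j k` divided by the weight. After
`commRow_eq_laguerreP` this is a polynomial identity modulo `(x + α) * (x + α)⁻¹ = 1`. -/
lemma commRow_mul_sub_commRow_mul (T : ℝ) (N j k : ℕ) (hxα : x + α ≠ 0) :
    commRow α T N j x * excLaguerre α (k + 1) x - commRow α T N k x * excLaguerre α (j + 1) x =
      2 * (k - j) * x * (excLaguerre α (j + 1) x * excLaguerre α (k + 1) x) +
        commDrift α T N j k x * excWronskian α j k x +
      (x - T) * (2 * (k - j) *
          ((1 - α - x - 2 * x / (x + α)) * (excLaguerre α (j + 1) x * excLaguerre α (k + 1) x) -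
            (x + α) * ((j + α + 1) * laguerreP (α - 1) j x * excLaguerre α (k + 1) x +
              (k + α + 1) * laguerreP (α - 1) k x * excLaguerre α (j + 1) x)) +
        (j + k + 1 - 2 * N - 2 * α / (x + α) ^ 2) * excWronskian α j k x +
        commDrift α T N j k x *
          ((j - k) * (excLaguerre α (j + 1) x * excLaguerre α (k + 1) x))) := by
  have hinv : (x + α) * (x + α)⁻¹ = 1 := mul_inv_cancel₀ hxα
  simp only [commRow_eq_laguerreP, excWronskian, excLaguerre_succ, commDiag, commOffDiag,
    commOffDiagTwo, commDrift, div_eq_mul_inv, ← inv_pow]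
  generalize laguerreP α j x = uj, laguerreP α k x = uk, laguerreP (α - 1) j x = yj,
    laguerreP (α - 1) k x = yk, (x + α)⁻¹ = q at *
  linear_combination
    ((4 * (x - T) * (k - j)) * (-(x + α) * uj - yj) * (-(x + α) * uk - yk) -
      (2 * α * (1 - q * (x - T))) * ((j + α + 1) * yj * (-(x + α) * uk - yk) -
        (k + α + 1) * yk * (-(x + α) * uj - yj)) -
      2 * α * (x - T) * ((j + α + 1) * uj * (-(x + α) * uk - yk) -
        (k + α + 1) * uk * (-(x + α) * uj - yj))) * hinv

lemma hasDerivAt_commFlux (T : ℝ) (N j k : ℕ) (hx : x ≠ 0) (hxα : x + α ≠ 0) :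
    HasDerivAt (commFlux α T N j k)
      ((commRow α T N j x * excLaguerre α (k + 1) x - commRow α T N k x * excLaguerre α (j + 1) x) *
        excWeight α x) x := by
  refine (((hasDerivAt_id' x).sub_const T).fun_mul
    (((hasDerivAt_mul_excLaguerre_mul_excLaguerre_mul_excWeight j k hx hxα).const_mul
      (2 * (k - j : ℝ))).fun_add ((hasDerivAt_commDrift T N j k hxα).fun_mul
        (hasDerivAt_excWronskian_mul_excWeight j k hx hxα)))).congr_deriv ?_
  rw [commRow_mul_sub_commRow_mul T N j k hxα]
  ring

lemma continuous_laguerreP (α : ℝ) (m : ℕ) : Continuous (laguerreP α m) := by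
  unfold laguerreP
  fun_prop

lemma continuous_excLaguerre (α : ℝ) (m : ℕ) : Continuous (excLaguerre α m) := by
  have := continuous_laguerreP α
  unfold excLaguerre
  split_ifs <;> fun_prop

lemma continuous_commRow (α T : ℝ) (N m : ℕ) : Continuous (commRow α T N m) := by
  have := continuous_excLaguerre α
  unfold commRow
  fun_prop

lemma excWeight_zero (hα : 0 < α) : excWeight α 0 = 0 := by
  simp [excWeight, zero_rpow hα.ne']

lemma continuousOn_excWeight (hα : 0 < α) : ContinuousOn (excWeight α) (Set.Ici 0) := by
  have hrpow : Continuous fun x : ℝ => x ^ α := continuous_rpow_const hα.le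
  refine ContinuousOn.div (by fun_prop) (by fun_prop) fun x (hx : 0 ≤ x) => ?_
  positivity

lemma continuousOn_commFlux (hα : 0 < α) (T : ℝ) (N j k : ℕ) :
    ContinuousOn (commFlux α T N j k) (Set.Ici 0) := by
  have hf := continuous_excLaguerre α
  have hy := continuous_laguerreP (α - 1)
  have hW := continuousOn_excWeight hα
  have hdrift : ContinuousOn (commDrift α T N j k) (Set.Ici 0) := fun x (hx : 0 ≤ x) =>
    (hasDerivAt_commDrift T N j k (by positivity)).continuousAt.continuousWithinAt
  have hwronskian : Continuous (excWronskian α j k) := by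
    unfold excWronskian
    fun_prop
  unfold commFlux
  fun_prop

lemma intervalIntegrable_mul_excWeight (hα : 0 < α) {T : ℝ} (hT : 0 ≤ T) {f : ℝ → ℝ}
    (hf : Continuous f) :
    IntervalIntegrable (fun x => f x * excWeight α x) volume 0 T := by
  refine (hf.continuousOn.mul ((continuousOn_excWeight hα).mono ?_)).intervalIntegrable
  rw [Set.uIcc_of_le hT]
  exact Set.Icc_subset_Ici_self

lemma integral_commRow_mul_excLaguerre_comm (hα : 0 < α) {T : ℝ} (hT : 0 ≤ T) (N j k : ℕ) :
    ∫ x in (0 : ℝ)..T, commRow α T N j x * excLaguerre α (k + 1) x * excWeight α x =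
      ∫ x in (0 : ℝ)..T, commRow α T N k x * excLaguerre α (j + 1) x * excWeight α x := by
  have integrable (j k : ℕ) := intervalIntegrable_mul_excWeight hα hT
    ((continuous_commRow α T N j).fun_mul (continuous_excLaguerre α (k + 1)))
  have hderiv : ∀ x ∈ Set.Ioo 0 T, HasDerivAt (commFlux α T N j k)
      (commRow α T N j x * excLaguerre α (k + 1) x * excWeight α x -
        commRow α T N k x * excLaguerre α (j + 1) x * excWeight α x) x := fun x hx => by
    rw [← sub_mul]
    exact hasDerivAt_commFlux T N j k hx.1.ne' (add_pos hx.1 hα).ne'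
  rw [← sub_eq_zero, ← intervalIntegral.integral_sub (integrable j k) (integrable k j),
    intervalIntegral.integral_eq_sub_of_hasDerivAt_of_le hT
      ((continuousOn_commFlux hα T N j k).mono Set.Icc_subset_Ici_self) hderiv
      ((integrable j k).sub (integrable k j))]
  simp [commFlux, excWeight_zero hα]

end Commutation

section Norm

open Polynomial Filter Topology

lemma integrableOn_exp_neg_mul_rpow_mul_eval {s : ℝ} (hs : 0 < s) (p : ℝ[X]) :
    IntegrableOn (fun x => exp (-x) * x ^ (s - 1) * p.eval x) (Set.Ioi 0) := by
  have monomial_integrable (k : ℕ) :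
      IntegrableOn (fun x => p.coeff k * (exp (-x) * x ^ (s + k - 1))) (Set.Ioi 0) :=
    (GammaIntegral_convergent (by positivity)).const_mul _
  refine Integrable.congr (integrable_finsetSum (Finset.range (p.natDegree + 1))
    fun k _ => monomial_integrable k) ?_
  filter_upwards [ae_restrict_mem measurableSet_Ioi] with x hx
  rw [eval_eq_sum_range, Finset.mul_sum]
  refine Finset.sum_congr rfl fun k _ => ?_
  rw [show s + k - 1 = s - 1 + k by ring, rpow_add_natCast (ne_of_gt hx)]
  ring

lemma tendsto_exp_neg_mul_rpow_mul_eval_atTop (s : ℝ) (p : ℝ[X]) :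
    Tendsto (fun x => exp (-x) * x ^ s * p.eval x) atTop (𝓝 0) := by
  have monomial_tendsto (k : ℕ) :
      Tendsto (fun x : ℝ => p.coeff k * (x ^ (s + k) * exp (-1 * x))) atTop (𝓝 0) := by
    simpa using (tendsto_rpow_mul_exp_neg_mul_atTop_nhds_zero (s + k) 1 one_pos).const_mul _
  have sum_tendsto := tendsto_finsetSum (Finset.range (p.natDegree + 1))
    fun k _ => monomial_tendsto k
  rw [Finset.sum_const_zero] at sum_tendsto
  refine sum_tendsto.congr' ?_
  filter_upwards [eventually_gt_atTop 0] with x hx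
  rw [eval_eq_sum_range, Finset.mul_sum]
  refine Finset.sum_congr rfl fun k _ => ?_
  rw [rpow_add_natCast hx.ne', neg_one_mul]
  ring

lemma exists_eval_eq_laguerreP (α : ℝ) (m : ℕ) :
    ∃ p : ℝ[X], ∀ x, p.eval x = laguerreP α m x :=
  ⟨∑ k ∈ Finset.range (m + 1), C ((-1) ^ k * genChoose (m + α) (m - k) / k.factorial) * X ^ k,
    fun x => by
      simp only [eval_finsetSum, eval_mul, eval_C, eval_pow, eval_X, laguerreP]
      exact Finset.sum_congr rfl fun k _ => by ring⟩

lemma hasDerivAt_laguerreFlux (α : ℝ) (m : ℕ) {x : ℝ} (hx : x ≠ 0) :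
    HasDerivAt
      (fun x => exp (-x) * x ^ α *
        (laguerreP α m x * (laguerreP (α - 1) (m + 1) x - laguerreP (α - 1) m x)))
      ((m + 1) * (exp (-x) * x ^ (α - 1) * laguerreP (α - 1) (m + 1) x ^ 2) -
        (m + α) * (exp (-x) * x ^ (α - 1) * laguerreP (α - 1) m x ^ 2)) x := by
  refine ((hasDerivAt_rpow_mul_exp_neg α hx).fun_mul ((hasDerivAt_laguerreP α m hx).fun_mul
    ((hasDerivAt_laguerreP_sub_one α (m + 1) x).fun_sub
      (hasDerivAt_laguerreP_sub_one α m x)))).congr_deriv ?_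
  have ladder := succ_mul_laguerreP_sub_one_succ α m x
  rw [laguerreP_succ_eq_add α m, rpow_sub_one hx]
  field_simp
  linear_combination -x ^ α * laguerreP (α - 1) (m + 1) x * ladder

lemma hasDerivAt_excFlux {α : ℝ} (m : ℕ) {x : ℝ} (hx : x ≠ 0) (hxα : x + α ≠ 0) :
    HasDerivAt
      (fun x => exp (-x) * x ^ α *
        (excLaguerre α (m + 1) x * laguerreP (α - 1) m x) * (x + α)⁻¹)
      (excLaguerre α (m + 1) x ^ 2 * excWeight α x -
        (m + α + 1) * (exp (-x) * x ^ (α - 1) * laguerreP (α - 1) m x ^ 2)) x := by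
  refine (((hasDerivAt_rpow_mul_exp_neg α hx).fun_mul ((hasDerivAt_excLaguerre m hx).fun_mul
    (hasDerivAt_laguerreP_sub_one α m x))).fun_mul
      (((hasDerivAt_id' x).add_const α).fun_inv hxα)).congr_deriv ?_
  rw [excWeight, rpow_sub_one hx, excLaguerre_succ]
  field_simp
  ring


lemma exists_eval_eq_excLaguerre (α : ℝ) (m : ℕ) :
    ∃ p : ℝ[X], ∀ x, p.eval x = excLaguerre α (m + 1) x := by
  obtain ⟨u, hu⟩ := exists_eval_eq_laguerreP α m
  obtain ⟨y, hy⟩ := exists_eval_eq_laguerreP (α - 1) m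
  exact ⟨-(X + C α) * u - y, fun x => by simp [hu, hy, excLaguerre_succ]⟩

variable {α : ℝ}

lemma integrableOn_exp_neg_mul_rpow_mul_laguerreP_sq (hα : 0 < α) (m : ℕ) :
    IntegrableOn (fun x => exp (-x) * x ^ (α - 1) * laguerreP (α - 1) m x ^ 2) (Set.Ioi 0) := by
  obtain ⟨p, hp⟩ := exists_eval_eq_laguerreP (α - 1) m
  have integrable := integrableOn_exp_neg_mul_rpow_mul_eval hα (p ^ 2)
  simp only [eval_pow, hp] at integrable
  exact integrable

lemma succ_mul_integral_laguerreP_sq_succ (hα : 0 < α) (m : ℕ) :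
    (m + 1) * ∫ x in Set.Ioi (0 : ℝ), exp (-x) * x ^ (α - 1) * laguerreP (α - 1) (m + 1) x ^ 2 =
      (m + α) * ∫ x in Set.Ioi (0 : ℝ), exp (-x) * x ^ (α - 1) * laguerreP (α - 1) m x ^ 2 := by
  obtain ⟨u, hu⟩ := exists_eval_eq_laguerreP α m
  obtain ⟨y, hy⟩ := exists_eval_eq_laguerreP (α - 1) m
  obtain ⟨z, hz⟩ := exists_eval_eq_laguerreP (α - 1) (m + 1)
  have hrpow : Continuous fun x : ℝ => x ^ α := continuous_rpow_const hα.le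
  have flux_continuous : Continuous fun x : ℝ => exp (-x) * x ^ α *
      (laguerreP α m x * (laguerreP (α - 1) (m + 1) x - laguerreP (α - 1) m x)) := by
    have := continuous_laguerreP
    fun_prop
  have flux_tendsto := tendsto_exp_neg_mul_rpow_mul_eval_atTop α (u * (z - y))
  simp only [eval_mul, eval_sub, hu, hy, hz] at flux_tendsto
  have hint (n : ℕ) := integrableOn_exp_neg_mul_rpow_mul_laguerreP_sq hα n
  have balance := integral_Ioi_of_hasDerivAt_of_tendsto
    flux_continuous.continuousWithinAt
    (fun x hx => hasDerivAt_laguerreFlux α m (ne_of_gt hx))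
    (((hint (m + 1)).const_mul _).sub ((hint m).const_mul _)) flux_tendsto
  rw [integral_sub ((hint (m + 1)).const_mul _) ((hint m).const_mul _), integral_const_mul,
    integral_const_mul, zero_rpow hα.ne'] at balance
  linear_combination balance

lemma integral_laguerreP_sq (hα : 0 < α) (m : ℕ) :
    ∫ x in Set.Ioi (0 : ℝ), exp (-x) * x ^ (α - 1) * laguerreP (α - 1) m x ^ 2 =
      Gamma (m + α) / m.factorial := by
  induction m with
  | zero => simp [laguerreP_zero_left, Gamma_eq_integral hα]
  | succ m ih =>
    have step := succ_mul_integral_laguerreP_sq_succ hα m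
    rw [ih] at step
    have hm : (m + α : ℝ) ≠ 0 := by positivity
    refine mul_left_cancel₀ (Nat.cast_add_one_ne_zero m) (step.trans ?_)
    rw [Nat.factorial_succ, Nat.cast_add_one, add_right_comm, Gamma_add_one hm]
    push_cast
    field_simp

/-- The squared norm of the exceptional Laguerre polynomial of degree `n`. -/
noncomputable def excNormSq (α : ℝ) (n : ℕ) : ℝ :=
  ∫ x in Set.Ioi (0 : ℝ), excLaguerre α n x ^ 2 * excWeight α x

lemma integrableOn_excLaguerre_sq_mul_excWeight (hα : 0 < α) (m : ℕ) :
    IntegrableOn (fun x => excLaguerre α (m + 1) x ^ 2 * excWeight α x) (Set.Ioi 0) := by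
  obtain ⟨p, hp⟩ := exists_eval_eq_excLaguerre α m
  have hclassical : IntegrableOn (fun x => exp (-x) * x ^ α * excLaguerre α (m + 1) x ^ 2)
      (Set.Ioi 0) := by
    have integrable := integrableOn_exp_neg_mul_rpow_mul_eval (show 0 < α + 1 by positivity) (p ^ 2)
    simp only [eval_pow, hp, add_sub_cancel_right] at integrable
    exact integrable
  have hmeas : ContinuousOn (fun x : ℝ => ((x + α) ^ 2)⁻¹) (Set.Ioi 0) :=
    ContinuousOn.inv₀ (by fun_prop) fun x (hx : 0 < x) => by positivity
  refine (hclassical.mul_bdd (c := (α ^ 2)⁻¹)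
    (hmeas.aestronglyMeasurable measurableSet_Ioi) ?_).congr
      (.of_forall fun x => by simp only [excWeight]; ring)
  filter_upwards [ae_restrict_mem measurableSet_Ioi] with x (hx : 0 < x)
  rw [norm_of_nonneg (by positivity)]
  gcongr
  linarith

lemma excNormSq_succ (hα : 0 < α) (m : ℕ) :
    excNormSq α (m + 1) = (m + α + 1) * (Gamma (m + α) / m.factorial) := by
  obtain ⟨f, hf⟩ := exists_eval_eq_excLaguerre α m
  obtain ⟨y, hy⟩ := exists_eval_eq_laguerreP (α - 1) m
  have hrpow : Continuous fun x : ℝ => x ^ α := continuous_rpow_const hα.le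
  have flux_continuousAt_zero : ContinuousAt (fun x : ℝ => exp (-x) * x ^ α *
      (excLaguerre α (m + 1) x * laguerreP (α - 1) m x) * (x + α)⁻¹) 0 := by
    have hexc := continuous_excLaguerre α (m + 1)
    have hlag := continuous_laguerreP (α - 1) m
    refine ContinuousAt.mul (by fun_prop) (ContinuousAt.inv₀ (by fun_prop) ?_)
    rw [zero_add]
    exact hα.ne'
  have flux_tendsto := (tendsto_exp_neg_mul_rpow_mul_eval_atTop α (f * y)).mul
    (tendsto_inv_atTop_zero.comp (tendsto_atTop_add_const_right atTop α tendsto_id))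
  simp only [eval_mul, hf, hy, Function.comp_def, id, mul_zero] at flux_tendsto
  have hexc := integrableOn_excLaguerre_sq_mul_excWeight hα m
  have hlag := (integrableOn_exp_neg_mul_rpow_mul_laguerreP_sq hα m).const_mul (m + α + 1)
  have balance := integral_Ioi_of_hasDerivAt_of_tendsto
    flux_continuousAt_zero.continuousWithinAt
    (fun x (hx : 0 < x) => hasDerivAt_excFlux m hx.ne' (add_pos hx hα).ne')
    (hexc.sub hlag) flux_tendsto
  rw [integral_sub hexc hlag, integral_const_mul, integral_laguerreP_sq hα,
    zero_rpow hα.ne'] at balance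
  rw [excNormSq]
  linear_combination balance

lemma excNormSq_pos (hα : 0 < α) (m : ℕ) : 0 < excNormSq α (m + 1) := by
  rw [excNormSq_succ hα]
  have := Gamma_pos_of_pos (show 0 < m + α by positivity)
  positivity

lemma excNormSq_add_two (hα : 0 < α) (m : ℕ) :
    (m + 1) * (m + α + 1) * excNormSq α (m + 2) =
      (m + α) * (m + α + 2) * excNormSq α (m + 1) := by
  have hm : (m + α : ℝ) ≠ 0 := by positivity
  rw [excNormSq_succ hα, excNormSq_succ hα, Nat.factorial_succ, Nat.cast_add_one,
    add_right_comm (m : ℝ) 1 α, Gamma_add_one hm]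
  push_cast
  field_simp
  ring

end Norm

section Matrices

/-- The entries of the infinite symmetric pentadiagonal matrix with diagonal `d`, first
superdiagonal `u` and second superdiagonal `v`. -/
def pentadiagonal (d u v : ℕ → ℝ) (i j : ℕ) : ℝ :=
  (if j = i then d i else 0) + (if j = i + 1 then u i else 0) + (if i = j + 1 then u j else 0) +
    (if j = i + 2 then v i else 0) + (if i = j + 2 then v j else 0)

lemma pentadiagonal_comm (d u v : ℕ → ℝ) (i j : ℕ) :
    pentadiagonal d u v i j = pentadiagonal d u v j i := by
  rcases eq_or_ne i j with rfl | hij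
  · rfl
  · simp only [pentadiagonal, hij, hij.symm, if_false]
    ring

/- The truncated subtractions are harmless because `g 0 = 0`. -/
lemma sum_range_pentadiagonal_mul (d : ℕ → ℝ) {u v g : ℕ → ℝ} {N i : ℕ} (hi : i < N)
    (hu : N ≤ i + 1 → u i = 0) (hv : N ≤ i + 2 → v i = 0) (hg : g 0 = 0) :
    ∑ j ∈ Finset.range N, pentadiagonal d u v i j * g (j + 1) =
      d i * g (i + 1) + u i * g (i + 2) + v i * g (i + 3) + u (i - 1) * g i +
        v (i - 2) * g (i - 1) := by
  have lower : ∑ j ∈ Finset.range N, (if i = j + 1 then u j * g (j + 1) else 0) =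
      u (i - 1) * g i := by
    cases i with
    | zero => simp [hg]
    | succ i =>
      simp only [add_left_inj, Finset.sum_ite_eq, Finset.mem_range, Nat.add_sub_cancel]
      exact if_pos (by lia)
  have lowerTwo : ∑ j ∈ Finset.range N, (if i = j + 2 then v j * g (j + 1) else 0) =
      v (i - 2) * g (i - 1) := by
    rcases i with _ | _ | i
    · simp [hg]
    · simp [hg]
    · simp only [add_left_inj, Finset.sum_ite_eq, Finset.mem_range, Nat.add_sub_cancel]
      exact if_pos (by lia)
  simp only [pentadiagonal, add_mul, ite_mul, zero_mul, Finset.sum_add_distrib, Finset.sum_ite_eq',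
    Finset.mem_range, lower, lowerTwo]
  grind

/-- The exceptional Laguerre polynomials normalised in `L²((0, ∞), excWeight α)`. -/
noncomputable def normExcLaguerre (α : ℝ) (n : ℕ) (x : ℝ) : ℝ :=
  excLaguerre α n x / √(excNormSq α n)

/-- The matrix of integrals over `(0, T)` of products of the normalised exceptional Laguerre
polynomials of degrees `1, …, N`. -/
noncomputable def excGram (α T : ℝ) (N : ℕ) : Matrix (Fin N) (Fin N) ℝ :=
  .of fun j k =>
    ∫ x in (0 : ℝ)..T, normExcLaguerre α (j + 1) x * normExcLaguerre α (k + 1) x * excWeight α x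

/-- The first superdiagonal of `commMatrix α T N`. -/
noncomputable def commSuper (α T : ℝ) (N m : ℕ) : ℝ :=
  -2 * commOffDiag α T N m * √((m + 1) * (m + α + 1) * ((m + α) * (m + α + 2)))

/-- The second superdiagonal of `commMatrix α T N`. -/
noncomputable def commSuperTwo (α : ℝ) (N m : ℕ) : ℝ :=
  commOffDiagTwo N m * √((m + 1) * (m + 2) * ((m + α) * (m + α + 3)))

/-- The pentadiagonal matrix commuting with `excGram α T N`: its rows are the combinations `commRow`
expressed in the normalised polynomials. -/
noncomputable def commMatrix (α T : ℝ) (N : ℕ) : Matrix (Fin N) (Fin N) ℝ :=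
  .of fun j k => pentadiagonal (commDiag α T N) (commSuper α T N) (commSuperTwo α N) j k

lemma sqrt_mul_div_sqrt_of_mul_eq {p q a b : ℝ} (hp : 0 ≤ p) (ha : 0 < a) (hb : 0 < b)
    (h : p * b = q * a) : √(p * q) / √b = p / √a := by
  have hq : p * q / b = p ^ 2 / a := by
    rw [div_eq_div_iff hb.ne' ha.ne']
    linear_combination -p * h
  rw [← sqrt_div' _ hb.le, hq, sqrt_div' _ ha.le, sqrt_sq hp]

variable {α : ℝ}

lemma excNormSq_add_three (hα : 0 < α) (m : ℕ) :
    (m + 1) * (m + 2) * excNormSq α (m + 3) = (m + α) * (m + α + 3) * excNormSq α (m + 1) := by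
  have first := excNormSq_add_two hα m
  have second := excNormSq_add_two hα (m + 1)
  push_cast at second
  refine mul_left_cancel₀ (show (m + α + 1) * (m + α + 2) ≠ 0 by positivity) ?_
  linear_combination (m + 1) * (m + α + 1) * second + (m + α + 1) * (m + α + 3) * first

lemma commSuper_mul_normExcLaguerre (hα : 0 < α) (T : ℝ) (N m : ℕ) (x : ℝ) :
    commSuper α T N m * normExcLaguerre α (m + 2) x =
      -2 * commOffDiag α T N m * ((m + 1) * (m + α + 1)) * excLaguerre α (m + 2) x /
        √(excNormSq α (m + 1)) := by
  have ratio := sqrt_mul_div_sqrt_of_mul_eq (by positivity) (excNormSq_pos hα m)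
    (excNormSq_pos hα (m + 1)) (excNormSq_add_two hα m)
  rw [commSuper, normExcLaguerre]
  linear_combination -2 * commOffDiag α T N m * excLaguerre α (m + 2) x * ratio

lemma commSuper_pred_mul_normExcLaguerre (hα : 0 < α) (T : ℝ) (N m : ℕ) (x : ℝ) :
    commSuper α T N (m - 1) * normExcLaguerre α m x =
      -2 * (N - m) * (T + 2 * N + α - 2 * m) * ((m - 1 + α) * (m + α + 1)) * excLaguerre α m x /
        √(excNormSq α (m + 1)) := by
  cases m with
  | zero => simp [normExcLaguerre, excLaguerre_zero]
  | succ m =>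
    have ratio := sqrt_mul_div_sqrt_of_mul_eq (by positivity) (excNormSq_pos hα (m + 1))
      (excNormSq_pos hα m) (excNormSq_add_two hα m).symm
    rw [mul_comm] at ratio
    rw [commSuper, normExcLaguerre, commOffDiag, Nat.add_sub_cancel]
    push_cast
    linear_combination -2 * ((N - 1 - m) * (T + 2 * (N - 1) + α - 2 * m)) *
      excLaguerre α (m + 1) x * ratio

lemma commSuperTwo_mul_normExcLaguerre (hα : 0 < α) (N m : ℕ) (x : ℝ) :
    commSuperTwo α N m * normExcLaguerre α (m + 3) x =
      commOffDiagTwo N m * ((m + 1) * (m + 2)) * excLaguerre α (m + 3) x /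
        √(excNormSq α (m + 1)) := by
  have ratio := sqrt_mul_div_sqrt_of_mul_eq (by positivity) (excNormSq_pos hα m)
    (excNormSq_pos hα (m + 2)) (excNormSq_add_three hα m)
  rw [commSuperTwo, normExcLaguerre]
  linear_combination commOffDiagTwo N m * excLaguerre α (m + 3) x * ratio

lemma commSuperTwo_pred_mul_normExcLaguerre (hα : 0 < α) (N m : ℕ) (x : ℝ) :
    commSuperTwo α N (m - 2) * normExcLaguerre α (m - 1) x =
      (N - m) * (N + 1 - m) * ((m - 2 + α) * (m + α + 1)) * excLaguerre α (m - 1) x /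
        √(excNormSq α (m + 1)) := by
  rcases m with _ | _ | m
  · simp [normExcLaguerre, excLaguerre_zero]
  · simp [normExcLaguerre, excLaguerre_zero]
  · have ratio := sqrt_mul_div_sqrt_of_mul_eq (by positivity) (excNormSq_pos hα (m + 2))
      (excNormSq_pos hα m) (excNormSq_add_three hα m).symm
    rw [mul_comm] at ratio
    simp only [commSuperTwo, normExcLaguerre, commOffDiagTwo, Nat.add_sub_cancel]
    push_cast
    linear_combination (N - 1 - m) * (N - 2 - m) * excLaguerre α (m + 1) x * ratio

lemma sum_commMatrix_mul_normExcLaguerre (hα : 0 < α) (T : ℝ) {N : ℕ} (j : Fin N) (x : ℝ) :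
    ∑ i, commMatrix α T N j i * normExcLaguerre α (i + 1) x =
      commRow α T N j x / √(excNormSq α (j + 1)) := by
  have band := sum_range_pentadiagonal_mul (commDiag α T N) (u := commSuper α T N)
    (v := commSuperTwo α N) (g := fun n => normExcLaguerre α n x) j.is_lt
    (fun h => by simp [commSuper, commOffDiag, show N = j + 1 by lia])
    (fun h => by
      obtain hN | hN : (N : ℝ) = j + 1 ∨ (N : ℝ) = j + 2 := by norm_cast; lia
      all_goals simp [commSuperTwo, commOffDiagTwo, hN])
    (by simp [normExcLaguerre, excLaguerre_zero])
  rw [← Fin.sum_univ_eq_sum_range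
    (fun i => pentadiagonal _ _ _ j i * normExcLaguerre α (i + 1) x)] at band
  refine band.trans ?_
  rw [commSuper_mul_normExcLaguerre hα, commSuper_pred_mul_normExcLaguerre hα,
    commSuperTwo_mul_normExcLaguerre hα, commSuperTwo_pred_mul_normExcLaguerre hα,
    normExcLaguerre, commRow]
  ring

lemma continuous_normExcLaguerre (α : ℝ) (n : ℕ) : Continuous (normExcLaguerre α n) :=
  (continuous_excLaguerre α n).div_const _

lemma commMatrix_mul_excGram_apply (hα : 0 < α) {T : ℝ} (hT : 0 ≤ T) {N : ℕ} (j k : Fin N) :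
    (commMatrix α T N * excGram α T N) j k =
      (∫ x in (0 : ℝ)..T, commRow α T N j x * excLaguerre α (k + 1) x * excWeight α x) /
        (√(excNormSq α (j + 1)) * √(excNormSq α (k + 1))) := by
  have integrable (i : Fin N) := intervalIntegrable_mul_excWeight hα hT
    ((continuous_normExcLaguerre α (i + 1)).fun_mul (continuous_normExcLaguerre α (k + 1)))
  simp only [Matrix.mul_apply, excGram, Matrix.of_apply, ← intervalIntegral.integral_const_mul]
  rw [← intervalIntegral.integral_finsetSum fun i _ => (integrable i).const_mul _,
    ← intervalIntegral.integral_div]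
  refine intervalIntegral.integral_congr fun x _ => ?_
  simp only [← mul_assoc, ← Finset.sum_mul, sum_commMatrix_mul_normExcLaguerre hα]
  rw [normExcLaguerre]
  ring

end Matrices

theorem laguerre_commuting_matrix_general {α : ℝ} (hα : 0 < α) {T : ℝ} (hT : 0 ≤ T) (N : ℕ) :
    commMatrix α T N * excGram α T N = excGram α T N * commMatrix α T N := by
  have comm_symm : (commMatrix α T N).IsSymm :=
    Matrix.IsSymm.ext fun j k => pentadiagonal_comm _ _ _ k j
  have gram_symm : (excGram α T N).IsSymm :=
    Matrix.IsSymm.ext fun j k => by simp only [excGram, Matrix.of_apply, mul_comm]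
  have prod_symm : (commMatrix α T N * excGram α T N).IsSymm :=
    Matrix.IsSymm.ext fun j k => by
      rw [commMatrix_mul_excGram_apply hα hT, commMatrix_mul_excGram_apply hα hT,
        integral_commRow_mul_excLaguerre_comm hα hT, mul_comm (√_)]
  rw [← prod_symm.eq, Matrix.transpose_mul, comm_symm.eq, gram_symm.eq]

lemma MMat_eq_excGram (T : ℝ) : MMat T = excGram 7 T 7 := by
  have weight (f x : ℝ) : f * exp (-x) * x ^ 7 / (x + 7) ^ 2 = f * excWeight 7 x := by
    rw [excWeight, rpow_ofNat]
    ring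
  have norm (n : ℕ) : normSqL n = excNormSq 7 n := by
    simp only [normSqL, excNormSq, weight]
  ext j k
  simp only [MMat, excGram, Matrix.of_apply, lTil, normExcLaguerre, norm, weight]

lemma of_pentadiagonal_seven (d u v : ℕ → ℝ) :
    (.of fun i j => pentadiagonal d u v i j : Matrix (Fin 7) (Fin 7) ℝ) =
      !![d 0, u 0, v 0, 0, 0, 0, 0;
        u 0, d 1, u 1, v 1, 0, 0, 0;
        v 0, u 1, d 2, u 2, v 2, 0, 0;
        0, v 1, u 2, d 3, u 3, v 3, 0;
        0, 0, v 2, u 3, d 4, u 4, v 4;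
        0, 0, 0, v 3, u 4, d 5, u 5;
        0, 0, 0, 0, v 4, u 5, d 6] := by
  ext i j
  fin_cases i <;> fin_cases j <;> simp [pentadiagonal]

lemma sqrt_eq_of_mul_self_eq {a b : ℝ} (ha : 0 ≤ a) (h : a * a = b) : √b = a := by
  rw [← h, sqrt_mul_self ha]

lemma sqrt_fourteen : √14 = √2 * √7 :=
  sqrt_eq_of_mul_self_eq (by positivity) (by ring_nf; norm_num)

lemma inv_mul_commDiag_seven (T : ℝ) :
    (660 * √14)⁻¹ * commDiag 7 T 7 0 = -√7 * (3 * T ^ 2 + 16 * T - 260) / (110 * √2) ∧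
    (660 * √14)⁻¹ * commDiag 7 T 7 1 = -(11 * T ^ 2 + 32 * T - 1232) / (66 * √14) ∧
    (660 * √14)⁻¹ * commDiag 7 T 7 2 = -(23 * T ^ 2 + 8 * T - 3060) / (165 * √14) ∧
    (660 * √14)⁻¹ * commDiag 7 T 7 3 = -(6 * T ^ 2 - 14 * T - 893) / (55 * √14) ∧
    (660 * √14)⁻¹ * commDiag 7 T 7 4 = -(25 * T ^ 2 - 128 * T - 3964) / (330 * √14) ∧
    (660 * √14)⁻¹ * commDiag 7 T 7 5 = -(13 * T ^ 2 - 104 * T - 2100) / (330 * √14) ∧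
    (660 * √14)⁻¹ * commDiag 7 T 7 6 = 0 := by
  have h7 : √7 ^ 2 = 7 := sq_sqrt (by norm_num)
  simp only [commDiag]
  refine ⟨?_, ?_, ?_, ?_, ?_, ?_, ?_⟩
  · rw [sqrt_fourteen]
    push_cast
    field_simp
    rw [h7]
    ring
  all_goals
    push_cast
    field_simp
    ring

lemma inv_mul_commSuper_seven (T : ℝ) :
    (660 * √14)⁻¹ * commSuper 7 T 7 0 = -6 * (T + 19) / 55 ∧
    (660 * √14)⁻¹ * commSuper 7 T 7 1 = -2 * √5 * (T + 17) / (11 * √7) ∧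
    (660 * √14)⁻¹ * commSuper 7 T 7 2 = -2 * √3 * (T + 15) / (√5 * √7 * √11) ∧
    (660 * √14)⁻¹ * commSuper 7 T 7 3 = -2 * √3 * (T + 13) / (√5 * √7 * √11) ∧
    (660 * √14)⁻¹ * commSuper 7 T 7 4 = -√26 * (T + 11) / (√3 * √5 * √7 * √11) ∧
    (660 * √14)⁻¹ * commSuper 7 T 7 5 = -√26 * (T + 9) / 55 := by
  have h26 : √26 = √2 * √13 :=
    sqrt_eq_of_mul_self_eq (by positivity) (by ring_nf; norm_num)
  have h504 : √504 = 6 * (√2 * √7) :=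
    sqrt_eq_of_mul_self_eq (by positivity) (by ring_nf; norm_num)
  have h1440 : √1440 = 12 * (√2 * √5) :=
    sqrt_eq_of_mul_self_eq (by positivity) (by ring_nf; norm_num)
  have h2970 : √2970 = 3 * (√2 * √3 * √5 * √11) :=
    sqrt_eq_of_mul_self_eq (by positivity) (by ring_nf; norm_num)
  have h5280 : √5280 = 4 * (√2 * √3 * √5 * √11) :=
    sqrt_eq_of_mul_self_eq (by positivity) (by ring_nf; norm_num)
  have h8580 : √8580 = 2 * (√3 * √5 * √11 * √13) :=
    sqrt_eq_of_mul_self_eq (by positivity) (by ring_nf; norm_num)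
  have h13104 : √13104 = 12 * (√7 * √13) :=
    sqrt_eq_of_mul_self_eq (by positivity) (by ring_nf; norm_num)
  simp only [commSuper, commOffDiag, sqrt_fourteen, h26]
  norm_num [h504, h1440, h2970, h5280, h8580, h13104]
  refine ⟨?_, ?_, ?_, ?_, ?_, ?_⟩ <;> field_simp <;> norm_num <;> ring

lemma inv_mul_commSuperTwo_seven :
    (660 * √14)⁻¹ * commSuperTwo 7 7 0 = √5 / (11 * √2) ∧
    (660 * √14)⁻¹ * commSuperTwo 7 7 1 = 2 * √2 / (√3 * √7 * √11) ∧
    (660 * √14)⁻¹ * commSuperTwo 7 7 2 = 18 * √2 / (55 * √7) ∧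
    (660 * √14)⁻¹ * commSuperTwo 7 7 3 = √13 / (11 * √7) ∧
    (660 * √14)⁻¹ * commSuperTwo 7 7 4 = 1 / √330 := by
  have h330 : √330 = √2 * √3 * √5 * √11 :=
    sqrt_eq_of_mul_self_eq (by positivity) (by ring_nf; norm_num)
  have h140 : √140 = 2 * (√5 * √7) :=
    sqrt_eq_of_mul_self_eq (by positivity) (by ring_nf; norm_num)
  have h528 : √528 = 4 * (√3 * √11) :=
    sqrt_eq_of_mul_self_eq (by positivity) (by ring_nf; norm_num)
  have h1296 : √1296 = 36 :=
    sqrt_eq_of_mul_self_eq (by positivity) (by norm_num)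
  have h2600 : √2600 = 10 * (√2 * √13) :=
    sqrt_eq_of_mul_self_eq (by positivity) (by ring_nf; norm_num)
  have h4620 : √4620 = 2 * (√3 * √5 * √7 * √11) :=
    sqrt_eq_of_mul_self_eq (by positivity) (by ring_nf; norm_num)
  simp only [commSuperTwo, commOffDiagTwo, sqrt_fourteen, h330]
  norm_num [h140, h528, h1296, h2600, h4620]
  refine ⟨?_, ?_, ?_, ?_, ?_⟩ <;> field_simp <;> norm_num

lemma LMat_eq_smul_commMatrix (T : ℝ) : LMat T = (660 * √14)⁻¹ • commMatrix 7 T 7 := by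
  obtain ⟨d0, d1, d2, d3, d4, d5, d6⟩ := inv_mul_commDiag_seven T
  obtain ⟨u0, u1, u2, u3, u4, u5⟩ := inv_mul_commSuper_seven T
  obtain ⟨v0, v1, v2, v3, v4⟩ := inv_mul_commSuperTwo_seven
  rw [commMatrix, of_pentadiagonal_seven]
  simp only [Matrix.smul_of, Matrix.smul_cons, Matrix.smul_empty, smul_eq_mul, mul_zero, d0, d1, d2,
    d3, d4, d5, d6, u0, u1, u2, u3, u4, u5, v0, v1, v2, v3, v4, LMat]

theorem laguerre_commuting_matrix (T : ℝ) (hT : 0 < T) :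
    LMat T * MMat T = MMat T * LMat T := by
  rw [LMat_eq_smul_commMatrix, MMat_eq_excGram, Matrix.smul_mul, Matrix.mul_smul,
    laguerre_commuting_matrix_general (by norm_num) hT.le]
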